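/- Let q = p^m be a prime power and k a positive divisor of q−1 with k ≠ q−1, and let A be the adjacency matrix of the generalized Paley graph Γ(k,q). Then the only eigenvalue of A of maximal modulus (q−1)/k is (q−1)/k itself: for every λ ∈ spectrum ℂ A, if the complex absolute value of λ equals (q−1)/k then λ = (q−1)/k. -/

import Mathlib

open scoped Classical

lemma gp_aux_eq_one (ι : Type*) (S : Finset ι) (u : ι → ℂ) (hu : ∀ s ∈ S, ‖u s‖ ≤ 1)
    (hs : ∑ s ∈ S, u s = (S.card : ℂ)) : ∀ s ∈ S, u s = 1 := by
  have h0 : ∑ s ∈ S, (1 - (u s).re) = 0 := by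
    have := congrArg Complex.re hs
    rw [Complex.re_sum] at this
    simp at this
    simp [this]
  have hle : ∀ s ∈ S, (u s).re ≤ 1 := fun s h => (Complex.re_le_norm _).trans (hu s h)
  rw [Finset.sum_eq_zero_iff_of_nonneg (fun s h => by linarith [hle s h])] at h0
  intro s h
  have h1 : (u s).re = 1 := by linarith [h0 s h]
  have h2 := hu s h
  have h3 : ‖u s‖ ^ 2 ≤ 1 := by nlinarith [norm_nonneg (u s)]
  rw [← Complex.normSq_eq_norm_sq, Complex.normSq_apply, h1] at h3
  apply Complex.ext
  · simpa using h1
  · have : (u s).im = 0 := by nlinarith [sq_nonneg (u s).im]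
    simpa using this

lemma gp_card (F : Type*) [Field F] [Fintype F] [DecidableEq F] (k : ℕ) (hk : 0 < k)
    (hd : k ∣ Fintype.card F - 1) :
    (Finset.univ.filter (fun s : F => ∃ z : F, z ≠ 0 ∧ z ^ k = s)).card
      = (Fintype.card F - 1) / k := by
  have h1 : Nat.card (powMonoidHom k : Fˣ →* Fˣ).range = (Fintype.card F - 1) / k := by
    rw [IsCyclic.card_powMonoidHom_range, Nat.card_eq_fintype_card, Fintype.card_units,
      Nat.gcd_eq_right hd]
  have h2 := Nat.card_image_of_injective (f := (Units.val : Fˣ → F)) Units.val_injective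
    ((powMonoidHom k : Fˣ →* Fˣ).range : Set Fˣ)
  rw [← h1]
  refine Eq.trans ?_ h2
  symm
  refine Nat.subtype_card _ ?_
  intro x
  rw [Finset.mem_filter]
  constructor
  · rintro ⟨-, z, hz, rfl⟩
    exact ⟨(Units.mk0 z hz) ^ k, ⟨Units.mk0 z hz, rfl⟩, by simp⟩
  · rintro ⟨_, ⟨u, rfl⟩, rfl⟩
    exact ⟨Finset.mem_univ _, u, u.ne_zero, by simp⟩

theorem gpGraph_spectrum_max_modulus
    (p m k : ℕ) (hp : p.Prime) (hm : 1 ≤ m)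
    (F : Type*) [Field F] [Fintype F] [DecidableEq F]
    (hF : Fintype.card F = p ^ m)
    (hk : 0 < k) (hkdvd : k ∣ p ^ m - 1) (hne : k ≠ p ^ m - 1)
    (A : Matrix F F ℂ)
    (hA : ∀ x y : F, A x y = if ∃ z : F, z ≠ 0 ∧ z ^ k = y - x then 1 else 0) :
    ∀ z ∈ spectrum ℂ A,
      ‖z‖ = (((p ^ m - 1) / k : ℕ) : ℝ) →
      z = (((p ^ m - 1) / k : ℕ) : ℂ) := by
  intro z hz hnorm
  have hcard := gp_card F k hk (hF ▸ hkdvd)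
  rw [hF] at hcard
  set S := Finset.univ.filter (fun s : F => ∃ z : F, z ≠ 0 ∧ z ^ k = s) with hS
  set n := (p ^ m - 1) / k with hn
  have hq : 2 ≤ p ^ m := hp.two_le.trans (Nat.le_self_pow (by omega) p)
  have hnk : n * k = p ^ m - 1 := Nat.div_mul_cancel hkdvd
  have hn0 : n ≠ 0 := by
    intro h; rw [h] at hnk; omega
  have hn1 : n ≠ 1 := by
    intro h; rw [h] at hnk; omega
  have hnC : (n : ℂ) ≠ 0 := by exact_mod_cast hn0
  have hnR : (n : ℝ) ≠ 0 := by exact_mod_cast hn0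
  -- coprimality
  have hcop : Nat.Coprime p n := by
    rw [hp.coprime_iff_not_dvd]
    intro h
    have h1 : p ∣ p ^ m - 1 := hnk ▸ h.mul_right k
    have h2 : p ∣ p ^ m := dvd_pow_self p (by omega)
    have h3 : p ∣ 1 := by
      have := Nat.dvd_sub h2 h1
      rwa [Nat.sub_sub_self (by omega)] at this
    exact hp.one_lt.ne' (Nat.dvd_one.mp h3)
  -- eigenvector
  obtain ⟨v, hv0, hv⟩ : ∃ v : F → ℂ, v ≠ 0 ∧ A.mulVec v = z • v := by
    rw [← Matrix.spectrum_toLin', ← Module.End.hasEigenvalue_iff_mem_spectrum] at hz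
    obtain ⟨v, hv⟩ := hz.exists_hasEigenvector
    exact ⟨v, hv.2, by simpa using hv.apply_eq_smul⟩
  have hsum : ∀ x, ∑ s ∈ S, v (x + s) = z * v x := by
    intro x
    have := congrFun hv x
    simp only [Matrix.mulVec, dotProduct, hA, Pi.smul_apply, smul_eq_mul] at this
    rw [← this, hS, Finset.sum_filter]
    refine Fintype.sum_equiv (Equiv.addLeft x) _ _ ?_
    intro s
    simp
  obtain ⟨x0, -, hx0⟩ := Finset.exists_max_image Finset.univ (fun x => ‖v x‖) ⟨0, by simp⟩
  have hx0p : v x0 ≠ 0 := by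
    intro h
    apply hv0
    ext y
    have := hx0 y (by simp)
    simpa [h] using this
  set c : ℂ := z / n with hc
  have hcn : ‖c‖ = 1 := by rw [hc, norm_div, hnorm]; simp [hnR]
  have hc0 : c ≠ 0 := by intro h; simp [h] at hcn
  have hzc : z = c * n := by rw [hc]; field_simp
  have step : ∀ x, ‖v x‖ = ‖v x0‖ → ∀ s ∈ S, v (x + s) = c * v x := by
    intro x hx s hs
    have hvx : v x ≠ 0 := by rw [← norm_ne_zero_iff, hx]; simpa using hx0p
    have hcv : c * v x ≠ 0 := mul_ne_zero hc0 hvx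
    have := gp_aux_eq_one F S (fun s => v (x + s) / (c * v x)) (fun s _ => by
      rw [norm_div, norm_mul, hcn, one_mul, hx]
      exact div_le_one_of_le₀ (hx0 _ (by simp)) (norm_nonneg _)) (by
      rw [← Finset.sum_div, hsum, hcard, hzc]; field_simp) s hs
    exact (div_eq_one_iff_eq hcv).mp this
  have hN : ∀ (j : ℕ), ‖c ^ j * v x0‖ = ‖v x0‖ := by intro j; simp [hcn]
  have hpc : c ^ p = 1 := by
    have hall : ∀ j : ℕ, v (x0 + j * 1) = c ^ j * v x0 := by
      intro j
      induction j with
      | zero => simp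
      | succ j ih =>
        have := step (x0 + j * 1) (by rw [ih, hN]) 1 (by rw [hS]; simp; exact ⟨1, by simp⟩)
        rw [ih] at this
        rw [pow_succ', mul_assoc, ← this]
        congr 1; push_cast; ring
    have h0 : (p : F) = 0 := by
      have := Nat.cast_card_eq_zero F
      rw [hF] at this
      push_cast at this
      exact pow_eq_zero_iff (by omega) |>.mp this
    have := hall p
    rw [h0] at this
    simp at this
    exact mul_right_cancel₀ hx0p (by rw [← this, one_mul])
  have hnc : c ^ n = 1 := by
    have hall : ∀ T : Finset F, T ⊆ S → v (x0 + ∑ s ∈ T, s) = c ^ T.card * v x0 := by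
      intro T
      induction T using Finset.induction_on with
      | empty => simp
      | insert a T ha ih =>
        intro h
        have ih := ih ((Finset.subset_insert _ _).trans h)
        have := step (x0 + ∑ s ∈ T, s) (by rw [ih, hN]) a (h (by simp))
        rw [ih] at this
        rw [Finset.card_insert_of_notMem ha, pow_succ', mul_assoc, ← this, Finset.sum_insert ha]
        congr 1; ring
    have h0 : ∑ s ∈ S, s = 0 := by
      obtain ⟨g, hg, hg1⟩ := Finset.exists_mem_ne (s := S) (by omega) 1
      obtain ⟨w, hw, hwg⟩ := (Finset.mem_filter.mp hg).2
      have : ∑ s ∈ S, s = ∑ s ∈ S, g * s := by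
        symm
        refine Finset.sum_bij' (fun s _ => g * s) (fun s _ => g⁻¹ * s) ?_ ?_ ?_ ?_ ?_
        · rintro s hs
          obtain ⟨t, ht, rfl⟩ := (Finset.mem_filter.mp hs).2
          exact Finset.mem_filter.mpr ⟨Finset.mem_univ _, w * t, mul_ne_zero hw ht, by rw [mul_pow, hwg]⟩
        · rintro s hs
          obtain ⟨t, ht, rfl⟩ := (Finset.mem_filter.mp hs).2
          exact Finset.mem_filter.mpr ⟨Finset.mem_univ _, w⁻¹ * t, mul_ne_zero (inv_ne_zero hw) ht,
            by rw [mul_pow, inv_pow, hwg]⟩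
        · intro s _
          have : g ≠ 0 := hwg ▸ pow_ne_zero k hw
          field_simp
        · intro s _
          have : g ≠ 0 := hwg ▸ pow_ne_zero k hw
          field_simp
        · intros; rfl
      rw [← Finset.mul_sum] at this
      have h2 : (g - 1) * ∑ s ∈ S, s = 0 := by linear_combination -this
      exact (mul_eq_zero.mp h2).resolve_left (sub_ne_zero.mpr hg1)
    have := hall S subset_rfl
    rw [h0, hcard] at this
    simp at this
    exact mul_right_cancel₀ hx0p (by rw [← this, one_mul])
  have hc1 : c = 1 := by
    have := pow_gcd_eq_one.mpr ⟨hpc, hnc⟩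
    rwa [hcop, pow_one] at this
  rw [hzc, hc1, one_mul]
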